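/- Let C be a nonempty closed convex subset of a real Hilbert space H, A : C → H an α-inverse strongly monotone mapping (α > 0), T : C → C nonexpansive with F = F(T) ∩ Ω ≠ ∅, {λ_n} ⊂ [a, b] ⊂ (0, 2α), {α_n} ⊂ [c, d] ⊂ (0, 1), and let {x_n}, {y_n} be generated from x₀ ∈ C by t_n = P_C(x_n − λ_n A x_n), y_n = α_n x_n + (1 − α_n) T t_n, x_{n+1} = T P_C(y_n − λ_n A y_n). Then lim_{n→∞} ‖x_n − t_n‖ = 0 and lim_{n→∞} ‖T x_n − x_n‖ = 0. -/

import Mathlib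

open scoped RealInnerProductSpace
open Filter Topology

/-!
For `p` a solution of the variational inequality, the obtuse-angle property of the projection and
inverse strong monotonicity combine into
`(1 - lam / (2 * α)) * ‖z - S z‖ ^ 2 ≤ ‖z - p‖ ^ 2 - ‖S z - p‖ ^ 2`, where `S z` is the projected
step `P (z - lam • A z)`. The convex-combination identity for the squared norm then makes
`‖x n - p‖ ^ 2` decrease at each iteration by at least fixed multiples of `‖x n - t n‖ ^ 2` and
`‖x n - T (t n)‖ ^ 2`; since this sequence converges, both residuals tend to zero.
-/

theorem tendsto_zero_of_mul_sq_le_sub_succ {f D : ℕ → ℝ} {k : ℝ} (hk : 0 < k)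
    (hf : ∀ n, 0 ≤ f n) (hD : BddBelow (Set.range D))
    (h : ∀ n, k * f n ^ 2 ≤ D n - D (n + 1)) : Tendsto f atTop (𝓝 0) := by
  have hanti : Antitone D := antitone_nat_of_succ_le fun n =>
    sub_nonneg.mp ((by positivity : 0 ≤ k * f n ^ 2).trans (h n))
  have hlim := tendsto_atTop_ciInf hanti hD
  have hdiff : Tendsto (fun n => (D n - D (n + 1)) / k) atTop (𝓝 0) := by
    simpa using (hlim.sub (hlim.comp (tendsto_add_atTop_nat 1))).div_const k
  have hsq : Tendsto (fun n => f n ^ 2) atTop (𝓝 0) :=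
    squeeze_zero (fun n => sq_nonneg _) (fun n => (le_div_iff₀' hk).mpr (h n)) hdiff
  simpa [Real.sqrt_sq, hf] using hsq.sqrt

section SeminormedGroup

variable {E : Type*} [SeminormedAddCommGroup E]

/-- `P` is the metric projection onto `C`: it sends every point to a nearest point of `C`. The
existence of nearest points is part of the predicate. -/
def IsMetricProjection (C : Set E) (P : E → E) : Prop :=
  ∀ u, P u ∈ C ∧ ∀ w ∈ C, ‖u - P u‖ ≤ ‖u - w‖

/-- `S` is `κ`-attracting on `C` with respect to the point `p`, in the sense of Bauschke and
Borwein: each application of `S` moves points of `C` closer to `p` by an amount controlled by the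
displacement. -/
def IsAttracting (κ : ℝ) (C : Set E) (p : E) (S : E → E) : Prop :=
  ∀ z ∈ C, κ * ‖z - S z‖ ^ 2 ≤ ‖z - p‖ ^ 2 - ‖S z - p‖ ^ 2

variable {C : Set E} {S T : E → E} {p : E} {κ : ℝ}

theorem IsAttracting.of_le {κ' : ℝ} (hS : IsAttracting κ C p S) (h : κ' ≤ κ) :
    IsAttracting κ' C p S := fun z hz =>
  (mul_le_mul_of_nonneg_right h (sq_nonneg _)).trans (hS z hz)

theorem IsAttracting.norm_apply_sub_le (hS : IsAttracting κ C p S) (hκ : 0 ≤ κ) {z : E}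
    (hz : z ∈ C) : ‖S z - p‖ ≤ ‖z - p‖ := by
  have hdrop : 0 ≤ κ * ‖z - S z‖ ^ 2 := by positivity
  exact (sq_le_sq₀ (norm_nonneg _) (norm_nonneg _)).mp (by linarith [hS z hz])

theorem tendsto_norm_apply_sub_self {ι : Type*} {l : Filter ι} {x t : ι → E}
    (hT : ∀ z ∈ C, ∀ w ∈ C, ‖T z - T w‖ ≤ ‖z - w‖) (hxC : ∀ n, x n ∈ C) (htC : ∀ n, t n ∈ C)
    (hxt : Tendsto (fun n => ‖x n - t n‖) l (𝓝 0))
    (hxTt : Tendsto (fun n => ‖x n - T (t n)‖) l (𝓝 0)) :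
    Tendsto (fun n => ‖T (x n) - x n‖) l (𝓝 0) := by
  refine squeeze_zero (fun _ => norm_nonneg _) (fun n => ?_) (by simpa using hxt.add hxTt)
  calc ‖T (x n) - x n‖ ≤ ‖T (x n) - T (t n)‖ + ‖T (t n) - x n‖ :=
        norm_sub_le_norm_sub_add_norm_sub _ _ _
    _ ≤ ‖x n - t n‖ + ‖x n - T (t n)‖ := by
        rw [norm_sub_rev (T (t n))]
        gcongr
        exact hT _ (hxC n) _ (htC n)

end SeminormedGroup

section InnerProduct

variable {H : Type*} [NormedAddCommGroup H] [InnerProductSpace ℝ H]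

theorem norm_sq_smul_add_one_sub_smul (u v : H) (s : ℝ) :
    ‖s • u + (1 - s) • v‖ ^ 2 =
      s * ‖u‖ ^ 2 + (1 - s) * ‖v‖ ^ 2 - s * (1 - s) * ‖u - v‖ ^ 2 := by
  simp only [norm_add_sq_real, norm_sub_sq_real, real_inner_smul_left, real_inner_smul_right,
    norm_smul, mul_pow, Real.norm_eq_abs, sq_abs]
  ring

/-- Inverse strong monotonicity (cocoercivity) of `A` on `C` with constant `α`. The operator is
total, but only its values on `C` matter. -/
def IsInverseStronglyMonotoneOn (α : ℝ) (A : H → H) (C : Set H) : Prop :=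
  ∀ x ∈ C, ∀ y ∈ C, α * ‖A x - A y‖ ^ 2 ≤ ⟪A x - A y, x - y⟫

/-- The solution set `VI(C, A)` of the variational inequality for `A` on `C`. -/
def variationalSolutions (C : Set H) (A : H → H) : Set H :=
  {x ∈ C | ∀ y ∈ C, 0 ≤ ⟪A x, y - x⟫}

variable {C : Set H} {P A S T : H → H} {p : H} {α κ : ℝ}

theorem IsMetricProjection.inner_sub_sub_nonpos (hP : IsMetricProjection C P) (hC : Convex ℝ C)
    (u : H) {w : H} (hw : w ∈ C) : ⟪u - P u, w - P u⟫ ≤ 0 := by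
  obtain ⟨hPu, hmin⟩ := hP u
  have : Nonempty C := ⟨⟨P u, hPu⟩⟩
  have hbdd : BddBelow (Set.range fun w : C => ‖u - w‖) :=
    ⟨0, Set.forall_mem_range.mpr fun _ => norm_nonneg _⟩
  have hinf : ‖u - P u‖ = ⨅ w : C, ‖u - w‖ :=
    le_antisymm (le_ciInf fun w => hmin w w.2) (ciInf_le hbdd ⟨P u, hPu⟩)
  exact (norm_eq_iInf_iff_real_inner_le_zero hC hPu).mp hinf w hw

theorem IsInverseStronglyMonotoneOn.neg_norm_sq_div_le_inner
    (hA : IsInverseStronglyMonotoneOn α A C) (hα : 0 < α) {z q : H} (hz : z ∈ C) (hq : q ∈ C)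
    (s : H) : -(‖z - s‖ ^ 2 / (4 * α)) ≤ ⟪A z - A q, s - q⟫ := by
  have hmono := hA z hz q hq
  have hsplit : ⟪A z - A q, s - q⟫ = ⟪A z - A q, z - q⟫ - ⟪A z - A q, z - s⟫ := by
    rw [← inner_sub_right, sub_sub_sub_cancel_left]
  have hyoung : ‖A z - A q‖ * ‖z - s‖ ≤ α * ‖A z - A q‖ ^ 2 + ‖z - s‖ ^ 2 / (4 * α) := by
    have hsq : α * ‖A z - A q‖ ^ 2 + ‖z - s‖ ^ 2 / (4 * α) - ‖A z - A q‖ * ‖z - s‖ =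
        (2 * α * ‖A z - A q‖ - ‖z - s‖) ^ 2 / (4 * α) := by
      field_simp
      ring
    rw [← sub_nonneg, hsq]
    positivity
  linarith [real_inner_le_norm (A z - A q) (z - s)]

theorem IsMetricProjection.isAttracting_sub_smul (hP : IsMetricProjection C P)
    (hC : Convex ℝ C) (hA : IsInverseStronglyMonotoneOn α A C) (hα : 0 < α)
    (hp : p ∈ variationalSolutions C A) {lam : ℝ} (hlam : 0 ≤ lam) :
    IsAttracting (1 - lam / (2 * α)) C p fun z => P (z - lam • A z) := by
  intro z hz
  obtain ⟨hpC, hpA⟩ := hp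
  have hproj := hP.inner_sub_sub_nonpos hC (z - lam • A z) hpC
  have hsol := hpA _ (hP (z - lam • A z)).1
  dsimp only
  set s := P (z - lam • A z)
  have hgrad : -(‖z - s‖ ^ 2 / (4 * α)) ≤ ⟪A z, s - p⟫ := by
    have hcoco := hA.neg_norm_sq_div_le_inner hα hz hpC s
    rw [inner_sub_left] at hcoco
    linarith
  have hdisp : lam * ⟪A z, s - p⟫ ≤ ⟪z - s, s - p⟫ := by
    rw [sub_right_comm, ← neg_sub s p, inner_neg_right, inner_sub_left,
      real_inner_smul_left] at hproj
    linarith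
  calc (1 - lam / (2 * α)) * ‖z - s‖ ^ 2
      = ‖z - s‖ ^ 2 + 2 * (lam * -(‖z - s‖ ^ 2 / (4 * α))) := by ring
    _ ≤ ‖z - s‖ ^ 2 + 2 * (lam * ⟪A z, s - p⟫) := by gcongr
    _ ≤ ‖z - s‖ ^ 2 + 2 * ⟪z - s, s - p⟫ := by gcongr
    _ = ‖z - p‖ ^ 2 - ‖s - p‖ ^ 2 := by
      rw [← sub_add_sub_cancel z s p, norm_add_sq_real]
      ring

theorem IsAttracting.relaxed_step_descent (hS : IsAttracting κ C p S) (hκ : 0 ≤ κ)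
    (hT : ∀ z ∈ C, ‖T z - p‖ ≤ ‖z - p‖) (hSC : Set.MapsTo S C C) (hTC : Set.MapsTo T C C)
    (hC : Convex ℝ C) {s : ℝ} (hs : s ∈ Set.Icc 0 1) {x y : H} (hx : x ∈ C)
    (hy : y = s • x + (1 - s) • T (S x)) :
    (1 - s) * κ * ‖x - S x‖ ^ 2 + s * (1 - s) * ‖x - T (S x)‖ ^ 2 ≤
      ‖x - p‖ ^ 2 - ‖T (S y) - p‖ ^ 2 := by
  have hs' : 0 ≤ 1 - s := sub_nonneg.mpr hs.2
  have hyC : y ∈ C := hy ▸ hC hx (hTC (hSC hx)) hs.1 hs' (by ring)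
  have hnext : ‖T (S y) - p‖ ^ 2 ≤ ‖y - p‖ ^ 2 := by
    gcongr
    exact (hT _ (hSC hyC)).trans (hS.norm_apply_sub_le hκ hyC)
  have hTS : ‖T (S x) - p‖ ^ 2 ≤ ‖x - p‖ ^ 2 - κ * ‖x - S x‖ ^ 2 := by
    have hTSx : ‖T (S x) - p‖ ^ 2 ≤ ‖S x - p‖ ^ 2 := by
      gcongr
      exact hT _ (hSC hx)
    linarith [hS x hx]
  have hcombo : ‖y - p‖ ^ 2 = s * ‖x - p‖ ^ 2 + (1 - s) * ‖T (S x) - p‖ ^ 2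
      - s * (1 - s) * ‖x - T (S x)‖ ^ 2 := by
    rw [← sub_sub_sub_cancel_right x (T (S x)) p, ← norm_sq_smul_add_one_sub_smul, hy]
    congr 2
    module
  linarith [mul_le_mul_of_nonneg_left hTS hs']

section RelaxedIteration

variable {S : ℕ → H → H} {x y : ℕ → H} {s : ℕ → ℝ} {c d : ℝ}

theorem tendsto_norm_sub_of_isAttracting (hS : ∀ n, IsAttracting κ C p (S n)) (hκ : 0 < κ)
    (hT : ∀ z ∈ C, ‖T z - p‖ ≤ ‖z - p‖) (hSC : ∀ n, Set.MapsTo (S n) C C)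
    (hTC : Set.MapsTo T C C) (hC : Convex ℝ C) (hc : 0 < c) (hd : d < 1)
    (hs : ∀ n, s n ∈ Set.Icc c d) (hxC : ∀ n, x n ∈ C)
    (hy : ∀ n, y n = s n • x n + (1 - s n) • T (S n (x n)))
    (hx : ∀ n, x (n + 1) = T (S n (y n))) :
    Tendsto (fun n => ‖x n - S n (x n)‖) atTop (𝓝 0) ∧
      Tendsto (fun n => ‖x n - T (S n (x n))‖) atTop (𝓝 0) := by
  have hd' : 0 < 1 - d := sub_pos.mpr hd
  have hdescent (n : ℕ) : (1 - d) * κ * ‖x n - S n (x n)‖ ^ 2 +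
      c * (1 - d) * ‖x n - T (S n (x n))‖ ^ 2 ≤ ‖x n - p‖ ^ 2 - ‖x (n + 1) - p‖ ^ 2 := by
    obtain ⟨hcs, hsd⟩ := hs n
    have hs0 : 0 ≤ s n := hc.le.trans hcs
    rw [hx]
    refine le_trans ?_ ((hS n).relaxed_step_descent hκ.le hT (hSC n) hTC hC
      ⟨hs0, hsd.trans hd.le⟩ (hxC n) (hy n))
    gcongr
  have hbdd : BddBelow (Set.range fun n => ‖x n - p‖ ^ 2) :=
    ⟨0, Set.forall_mem_range.mpr fun _ => sq_nonneg _⟩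
  constructor
  · refine tendsto_zero_of_mul_sq_le_sub_succ (mul_pos hd' hκ) (fun _ => norm_nonneg _) hbdd
      fun n => le_trans (le_add_of_nonneg_right ?_) (hdescent n)
    positivity
  · refine tendsto_zero_of_mul_sq_le_sub_succ (mul_pos hc hd') (fun _ => norm_nonneg _) hbdd
      fun n => le_trans (le_add_of_nonneg_left ?_) (hdescent n)
    positivity

end RelaxedIteration

theorem stmt_15_general (hC : Convex ℝ C) (hP : IsMetricProjection C P)
    (hA : IsInverseStronglyMonotoneOn α A C) (hTC : Set.MapsTo T C C)
    (hT : ∀ z ∈ C, ∀ w ∈ C, ‖T z - T w‖ ≤ ‖z - w‖)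
    (hne : (Function.fixedPoints T ∩ variationalSolutions C A).Nonempty)
    {b c d : ℝ} (hb : b < 2 * α) (hc : 0 < c) (hd : d < 1)
    {lam : ℕ → ℝ} (hlam : ∀ n, lam n ∈ Set.Icc 0 b) {s : ℕ → ℝ} (hs : ∀ n, s n ∈ Set.Icc c d)
    {x y t : ℕ → H} (hx0 : x 0 ∈ C) (ht : ∀ n, t n = P (x n - lam n • A (x n)))
    (hy : ∀ n, y n = s n • x n + (1 - s n) • T (t n))
    (hx : ∀ n, x (n + 1) = T (P (y n - lam n • A (y n)))) :
    Tendsto (fun n => ‖x n - t n‖) atTop (𝓝 0) ∧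
      Tendsto (fun n => ‖T (x n) - x n‖) atTop (𝓝 0) := by
  obtain rfl : t = fun n => P (x n - lam n • A (x n)) := funext ht
  obtain ⟨p, hTp, hpA⟩ := hne
  have hα : 0 < α := by linarith [(hlam 0).1, (hlam 0).2]
  have hκ : 0 < 1 - b / (2 * α) := sub_pos.mpr ((div_lt_one (by positivity)).mpr hb)
  have hattr (n : ℕ) : IsAttracting (1 - b / (2 * α)) C p fun z => P (z - lam n • A z) := by
    refine (hP.isAttracting_sub_smul hC hA hα hpA (hlam n).1).of_le ?_
    gcongr
    exact (hlam n).2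
  have hTquasi (z : H) (hz : z ∈ C) : ‖T z - p‖ ≤ ‖z - p‖ := by
    simpa only [hTp.eq] using hT z hz p hpA.1
  have hxC : ∀ n, x n ∈ C
    | 0 => hx0
    | n + 1 => hx n ▸ hTC (hP _).1
  obtain ⟨hxt, hxTt⟩ := tendsto_norm_sub_of_isAttracting hattr hκ hTquasi
    (fun _ _ _ => (hP _).1) hTC hC hc hd hs hxC hy hx
  exact ⟨hxt, tendsto_norm_apply_sub_self hT hxC (fun _ => (hP _).1) hxt hxTt⟩

end InnerProduct

theorem stmt_15
    {H : Type*} [NormedAddCommGroup H] [InnerProductSpace ℝ H] [CompleteSpace H]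
    (C : Set H) (hCne : C.Nonempty) (hCcl : IsClosed C) (hCcv : Convex ℝ C)
    (PC : H → H) (hPC : ∀ u : H, PC u ∈ C ∧ ∀ w ∈ C, ‖u - PC u‖ ≤ ‖u - w‖)
    (α : ℝ) (hα : 0 < α) (A : H → H)
    (hA : ∀ x ∈ C, ∀ y ∈ C, ⟪A x - A y, x - y⟫ ≥ α * ‖A x - A y‖ ^ 2)
    (T : H → H) (hTmaps : Set.MapsTo T C C)
    (hT : ∀ x ∈ C, ∀ y ∈ C, ‖T x - T y‖ ≤ ‖x - y‖)
    (F : Set H)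
    (hF : F = {x ∈ C | T x = x} ∩ {x ∈ C | ∀ y ∈ C, ⟪A x, y - x⟫ ≥ 0})
    (hFne : F.Nonempty)
    (a b c d : ℝ) (ha : 0 < a) (hab : a ≤ b) (hb : b < 2 * α)
    (hc : 0 < c) (hcd : c ≤ d) (hd : d < 1)
    (lam : ℕ → ℝ) (hlam : ∀ n, lam n ∈ Set.Icc a b)
    (alp : ℕ → ℝ) (halp : ∀ n, alp n ∈ Set.Icc c d)
    (x y t : ℕ → H) (hx0 : x 0 ∈ C)
    (ht : ∀ n, t n = PC (x n - lam n • A (x n)))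
    (hy : ∀ n, y n = alp n • x n + (1 - alp n) • T (t n))
    (hx : ∀ n, x (n + 1) = T (PC (y n - lam n • A (y n)))) :
    Tendsto (fun n => ‖x n - t n‖) atTop (𝓝 0) ∧
    Tendsto (fun n => ‖T (x n) - x n‖) atTop (𝓝 0) := by
  subst hF
  exact stmt_15_general hCcv hPC hA hTmaps hT (hFne.mono fun _ h => ⟨h.1.2, h.2⟩) hb hc hd
    (fun n => ⟨ha.le.trans (hlam n).1, (hlam n).2⟩) halp hx0 ht hy hx
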